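/- Let n ≥ 1, N = 2n+1, let a_0, a_1, …, a_n, b_1, …, b_n be real numbers, and let T_n(t) = a_0/2 + Σ_{k=1}^n (a_k cos kt + b_k sin kt). Let (v_k)_{k≥1} be a sequence of real numbers with Σ_{k=1}^∞ |v_k| < ∞, and for 1 ≤ k ≤ n define C_k(t) = v_k cos kt + Σ_{m=1}^∞ [v_{mN+k} cos((mN+k)t) + v_{mN−k} cos((mN−k)t)], S_k(t) = v_k sin kt + Σ_{m=1}^∞ [v_{mN+k} sin((mN+k)t) − v_{mN−k} sin((mN−k)t)], and H_k = v_k + Σ_{m=1}^∞ (−1)^m [v_{mN+k} + v_{mN−k}]. If H_k ≠ 0 for every k = 1, …, n, then the function ST(t) = a_0/2 + Σ_{k=1}^n H_k^{−1} [a_k C_k(t) + b_k S_k(t)] satisfies ST(t_i) = T_n(t_i) at every node t_i = π(2i−1)/N, i = 1, …, N. -/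

import Mathlib

open Real Finset

/-!
If `cos (N x) = ε = ±1`, then `sin (N x) = 0`, so at `x` every frequency `mN ± k` aliases to `±k`
up to the sign `ε ^ m`. Hence the series of aliased cosines and sines at `x` are multiples of
`cos (k x)` and `sin (k x)`, with one and the same factor, the multiplier by which the spline
divides. At the nodes of the theorem, `N x` is an odd multiple of `π`, so that `ε = -1`.
-/

/-- The trigonometric polynomial with coefficients `a0`, `a k`, `b k`, where `1 ≤ k ≤ n`. -/
noncomputable def trigPoly (n : ℕ) (a0 : ℝ) (a b : ℕ → ℝ) (x : ℝ) : ℝ :=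
  a0 / 2 + ∑ k ∈ Icc 1 n, (a k * cos ((k : ℝ) * x) + b k * sin ((k : ℝ) * x))

/-- The paper's `C_k`: the cosines of frequency `k` and `mN ± k`, `m ≥ 1`, weighted by `v`.
The summation index is `m - 1`, and the natural subtraction is meant for `k ≤ N`. -/
noncomputable def aliasedCos (v : ℕ → ℝ) (N k : ℕ) (x : ℝ) : ℝ :=
  v k * cos ((k : ℝ) * x) +
    ∑' m : ℕ, (v ((m + 1) * N + k) * cos ((((m + 1) * N + k : ℕ) : ℝ) * x) +
      v ((m + 1) * N - k) * cos ((((m + 1) * N - k : ℕ) : ℝ) * x))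

/-- The paper's `S_k`, the sine counterpart of `aliasedCos`. The frequency `mN - k` enters with a
minus sign because it aliases to `-k`. -/
noncomputable def aliasedSin (v : ℕ → ℝ) (N k : ℕ) (x : ℝ) : ℝ :=
  v k * sin ((k : ℝ) * x) +
    ∑' m : ℕ, (v ((m + 1) * N + k) * sin ((((m + 1) * N + k : ℕ) : ℝ) * x) -
      v ((m + 1) * N - k) * sin ((((m + 1) * N - k : ℕ) : ℝ) * x))

/-- The normalizing multiplier `H_k` of the grid `cos (N x) = ε`. The paper's `H_k^{(1)}` is the
case `ε = -1`, and `ε = 1` belongs to the grid of multiples of `2π / N`. -/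
noncomputable def aliasMultiplier (ε : ℝ) (v : ℕ → ℝ) (N k : ℕ) : ℝ :=
  v k + ∑' m : ℕ, ε ^ (m + 1) * (v ((m + 1) * N + k) + v ((m + 1) * N - k))

/-- The trigonometric spline built from `trigPoly n a0 a b` with convergence factors `v`, normalized
for the grid `cos (N x) = ε`. -/
noncomputable def trigSpline (ε : ℝ) (v : ℕ → ℝ) (n N : ℕ) (a0 : ℝ) (a b : ℕ → ℝ) (x : ℝ) : ℝ :=
  a0 / 2 + ∑ k ∈ Icc 1 n,
    (aliasMultiplier ε v N k)⁻¹ * (a k * aliasedCos v N k x + b k * aliasedSin v N k x)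

theorem trigSpline_eq_of_forall {ε : ℝ} {v : ℕ → ℝ} {n N : ℕ} {C S : ℕ → ℝ → ℝ} {H : ℕ → ℝ}
    (hC : ∀ k, 1 ≤ k → k ≤ n → ∀ x, C k x = aliasedCos v N k x)
    (hS : ∀ k, 1 ≤ k → k ≤ n → ∀ x, S k x = aliasedSin v N k x)
    (hH : ∀ k, 1 ≤ k → k ≤ n → H k = aliasMultiplier ε v N k)
    (a0 : ℝ) (a b : ℕ → ℝ) (x : ℝ) :
    trigSpline ε v n N a0 a b x =
      a0 / 2 + ∑ k ∈ Icc 1 n, (H k)⁻¹ * (a k * C k x + b k * S k x) := by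
  refine congrArg (a0 / 2 + ·) (sum_congr rfl fun k hk => ?_)
  obtain ⟨h1, hn⟩ := mem_Icc.mp hk
  rw [hC k h1 hn, hS k h1 hn, hH k h1 hn]

theorem sin_natCast_mul_of_sin_eq_zero {θ : ℝ} (hθ : sin θ = 0) (m : ℕ) : sin (m * θ) = 0 := by
  obtain ⟨j, rfl⟩ := sin_eq_zero_iff.mp hθ
  exact sin_eq_zero_iff.mpr ⟨m * j, by push_cast; ring⟩

theorem cos_natCast_mul_of_sin_eq_zero {θ : ℝ} (hθ : sin θ = 0) (m : ℕ) :
    cos (m * θ) = cos θ ^ m := by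
  induction m with
  | zero => simp
  | succ m ih => rw [Nat.cast_succ, add_one_mul, cos_add, ih, hθ, mul_zero, sub_zero, pow_succ]

section Alias

variable {N k m : ℕ} {x : ℝ}

theorem cos_alias_add (hx : sin (N * x) = 0) :
    cos (((m * N + k : ℕ) : ℝ) * x) = cos (N * x) ^ m * cos (k * x) := by
  rw [Nat.cast_add, Nat.cast_mul, add_mul, mul_assoc, cos_add,
    cos_natCast_mul_of_sin_eq_zero hx, sin_natCast_mul_of_sin_eq_zero hx, zero_mul, sub_zero]

theorem cos_alias_sub (hx : sin (N * x) = 0) (hk : k ≤ m * N) :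
    cos (((m * N - k : ℕ) : ℝ) * x) = cos (N * x) ^ m * cos (k * x) := by
  rw [Nat.cast_sub hk, Nat.cast_mul, sub_mul, mul_assoc, cos_sub,
    cos_natCast_mul_of_sin_eq_zero hx, sin_natCast_mul_of_sin_eq_zero hx, zero_mul, add_zero]

theorem sin_alias_add (hx : sin (N * x) = 0) :
    sin (((m * N + k : ℕ) : ℝ) * x) = cos (N * x) ^ m * sin (k * x) := by
  rw [Nat.cast_add, Nat.cast_mul, add_mul, mul_assoc, sin_add,
    cos_natCast_mul_of_sin_eq_zero hx, sin_natCast_mul_of_sin_eq_zero hx, zero_mul, zero_add]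

theorem sin_alias_sub (hx : sin (N * x) = 0) (hk : k ≤ m * N) :
    sin (((m * N - k : ℕ) : ℝ) * x) = -(cos (N * x) ^ m * sin (k * x)) := by
  rw [Nat.cast_sub hk, Nat.cast_mul, sub_mul, mul_assoc, sin_sub,
    cos_natCast_mul_of_sin_eq_zero hx, sin_natCast_mul_of_sin_eq_zero hx, zero_mul, zero_sub]

end Alias

section Series

variable {v : ℕ → ℝ} {N k : ℕ} {x : ℝ}

theorem summable_alias {ε : ℝ} (hε : |ε| ≤ 1) (hv : Summable fun k => |v k|) (hN : N ≠ 0)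
    (hk : k ≤ N) :
    Summable fun m : ℕ => ε ^ (m + 1) * (v ((m + 1) * N + k) + v ((m + 1) * N - k)) := by
  have hinj : Function.Injective fun m : ℕ => (m + 1) * N :=
    (mul_left_injective₀ hN).comp (add_left_injective 1)
  have hkm (m : ℕ) : k ≤ (m + 1) * N := hk.trans (Nat.le_mul_of_pos_left N m.succ_pos)
  have hadd : Summable fun m : ℕ => |v ((m + 1) * N + k)| :=
    hv.comp_injective ((add_left_injective k).comp hinj)
  have hsub : Summable fun m : ℕ => |v ((m + 1) * N - k)| :=
    hv.comp_injective fun i j hij => hinj ((tsub_left_inj (hkm i) (hkm j)).mp hij)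
  refine (hadd.add hsub).of_norm_bounded fun m => ?_
  rw [norm_mul, norm_pow, norm_eq_abs, norm_eq_abs]
  calc |ε| ^ (m + 1) * |v ((m + 1) * N + k) + v ((m + 1) * N - k)|
      ≤ 1 * |v ((m + 1) * N + k) + v ((m + 1) * N - k)| := by
        gcongr
        exact pow_le_one₀ (abs_nonneg ε) hε
    _ ≤ |v ((m + 1) * N + k)| + |v ((m + 1) * N - k)| := by
        rw [one_mul]
        exact abs_add_le _ _

theorem hasSum_cos_alias {A : ℝ} (hk : k ≤ N) (hx : sin (N * x) = 0)
    (hA : HasSum (fun m : ℕ =>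
      cos (N * x) ^ (m + 1) * (v ((m + 1) * N + k) + v ((m + 1) * N - k))) A) :
    HasSum (fun m : ℕ => v ((m + 1) * N + k) * cos ((((m + 1) * N + k : ℕ) : ℝ) * x) +
      v ((m + 1) * N - k) * cos ((((m + 1) * N - k : ℕ) : ℝ) * x)) (A * cos (k * x)) := by
  refine (hA.mul_right (cos (k * x))).congr_fun fun m => ?_
  have hkm : k ≤ (m + 1) * N := hk.trans (Nat.le_mul_of_pos_left N m.succ_pos)
  rw [cos_alias_add hx, cos_alias_sub hx hkm]
  ring

theorem hasSum_sin_alias {A : ℝ} (hk : k ≤ N) (hx : sin (N * x) = 0)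
    (hA : HasSum (fun m : ℕ =>
      cos (N * x) ^ (m + 1) * (v ((m + 1) * N + k) + v ((m + 1) * N - k))) A) :
    HasSum (fun m : ℕ => v ((m + 1) * N + k) * sin ((((m + 1) * N + k : ℕ) : ℝ) * x) -
      v ((m + 1) * N - k) * sin ((((m + 1) * N - k : ℕ) : ℝ) * x)) (A * sin (k * x)) := by
  refine (hA.mul_right (sin (k * x))).congr_fun fun m => ?_
  have hkm : k ≤ (m + 1) * N := hk.trans (Nat.le_mul_of_pos_left N m.succ_pos)
  rw [sin_alias_add hx, sin_alias_sub hx hkm]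
  ring

theorem aliasedCos_eq (hk : k ≤ N) (hx : sin (N * x) = 0)
    (hsum : Summable fun m : ℕ =>
      cos (N * x) ^ (m + 1) * (v ((m + 1) * N + k) + v ((m + 1) * N - k))) :
    aliasedCos v N k x = aliasMultiplier (cos (N * x)) v N k * cos (k * x) := by
  rw [aliasedCos, aliasMultiplier, add_mul, (hasSum_cos_alias hk hx hsum.hasSum).tsum_eq]

theorem aliasedSin_eq (hk : k ≤ N) (hx : sin (N * x) = 0)
    (hsum : Summable fun m : ℕ =>
      cos (N * x) ^ (m + 1) * (v ((m + 1) * N + k) + v ((m + 1) * N - k))) :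
    aliasedSin v N k x = aliasMultiplier (cos (N * x)) v N k * sin (k * x) := by
  rw [aliasedSin, aliasMultiplier, add_mul, (hasSum_sin_alias hk hx hsum.hasSum).tsum_eq]

end Series

theorem spline_interpolates_poly_grid1_general {n N : ℕ} (hnN : n ≤ N) {v : ℕ → ℝ}
    (hv : Summable fun k => |v k|) {ε : ℝ} (hε : ε = 1 ∨ ε = -1)
    (hH : ∀ k, 1 ≤ k → k ≤ n → aliasMultiplier ε v N k ≠ 0)
    (a0 : ℝ) (a b : ℕ → ℝ) {x : ℝ} (hx : cos (N * x) = ε) :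
    trigSpline ε v n N a0 a b x = trigPoly n a0 a b x := by
  subst hx
  have hsin : sin (N * x) = 0 := sin_eq_zero_iff_cos_eq.mpr hε
  refine congrArg (a0 / 2 + ·) (sum_congr rfl fun k hk => ?_)
  obtain ⟨h1, hn⟩ := mem_Icc.mp hk
  have hkN : k ≤ N := hn.trans hnN
  have hsum := summable_alias (abs_cos_le_one (N * x)) hv (Nat.ne_zero_of_lt (h1.trans hkN)) hkN
  rw [aliasedCos_eq hkN hsin hsum, aliasedSin_eq hkN hsin hsum, mul_left_comm,
    mul_left_comm (b k), ← mul_add, inv_mul_cancel_left₀ (hH k h1 hn)]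

theorem cos_natCast_mul_node {N : ℕ} (hN : N ≠ 0) (i : ℕ) :
    cos (N * (π * (2 * (i : ℝ) - 1) / N)) = -1 := by
  have hnode : (N : ℝ) * (π * (2 * (i : ℝ) - 1) / N) = i * (2 * π) - π := by
    rw [mul_div_cancel₀ _ (Nat.cast_ne_zero.mpr hN)]
    ring
  rw [hnode, cos_nat_mul_two_pi_sub_pi]

/-- Theorem 1 of the paper (sufficiency, grid `Δ_N^{(1)}`): with the normalizing
multipliers `H k = v k + Σ_{m≥1} (-1)^m (v (mN+k) + v (mN-k))`, assumed nonzero, the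
trigonometric spline `ST` interpolates the trigonometric polynomial `T` at the
nodes `t i = π(2i-1)/N`, `i = 1, …, N`, `N = 2n+1`. -/
theorem spline_interpolates_poly_grid1
    (n N : ℕ) (hn : 1 ≤ n) (hN : N = 2 * n + 1)
    (a0 : ℝ) (a b : ℕ → ℝ)
    (T : ℝ → ℝ)
    (hT : ∀ x, T x = a0 / 2 +
      ∑ k ∈ Finset.Icc 1 n, (a k * Real.cos ((k : ℝ) * x) + b k * Real.sin ((k : ℝ) * x)))
    (v : ℕ → ℝ) (hv : Summable fun k => |v k|)
    (C S : ℕ → ℝ → ℝ) (H : ℕ → ℝ)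
    (hC : ∀ k, 1 ≤ k → k ≤ n → ∀ x, C k x = v k * Real.cos ((k : ℝ) * x) +
      ∑' m : ℕ, (v ((m + 1) * N + k) * Real.cos ((((m + 1) * N + k : ℕ) : ℝ) * x) +
        v ((m + 1) * N - k) * Real.cos ((((m + 1) * N - k : ℕ) : ℝ) * x)))
    (hS : ∀ k, 1 ≤ k → k ≤ n → ∀ x, S k x = v k * Real.sin ((k : ℝ) * x) +
      ∑' m : ℕ, (v ((m + 1) * N + k) * Real.sin ((((m + 1) * N + k : ℕ) : ℝ) * x) -
        v ((m + 1) * N - k) * Real.sin ((((m + 1) * N - k : ℕ) : ℝ) * x)))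
    (hH : ∀ k, 1 ≤ k → k ≤ n →
      H k = v k + ∑' m : ℕ, (-1 : ℝ) ^ (m + 1) * (v ((m + 1) * N + k) + v ((m + 1) * N - k)))
    (hHne : ∀ k, 1 ≤ k → k ≤ n → H k ≠ 0)
    (ST : ℝ → ℝ)
    (hST : ∀ x, ST x = a0 / 2 +
      ∑ k ∈ Finset.Icc 1 n, (H k)⁻¹ * (a k * C k x + b k * S k x))
    (t : ℕ → ℝ) (ht : ∀ i, t i = π * (2 * (i : ℝ) - 1) / N) :
    ∀ i ∈ Finset.Icc 1 N, ST (t i) = T (t i) := by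
  intro i _
  rw [hST, hT, ← trigSpline_eq_of_forall (ε := -1) hC hS hH]
  exact spline_interpolates_poly_grid1_general (by omega) hv (.inr rfl)
    (fun k h1 hk => (hH k h1 hk).symm.trans_ne (hHne k h1 hk)) a0 a b
    (ht i ▸ cos_natCast_mul_node (by omega) i)
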